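/- arXiv:2602.22081 — 2 statements merged into one kernel-verified Lean document; each statement's English description precedes it below -/
import Mathlib

section
/- Let M, L, w be positive integers with M < w and w ≥ 2. If every prime factor of L is at least 2w - 1, then every AM-OPPTS MC-CAC of length L and weight w in M channels has at most M(M-1)(L-1)/((2w-M)(w-1)) + M(L-1)/(2w-2) codewords. -/
/-- The set of time slots used by codeword `S` on channel `i`. -/
def chan {M L : ℕ} (S : Finset (Fin M × ZMod L)) (i : Fin M) : Finset (ZMod L) :=
  (S.filter fun p => p.1 = i).image Prod.snd

/-- The `(i,j)` set of differences of a codeword `S ⊆ {1,…,M} × Z_L`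
(with `0` removed when `i = j`). -/
def Darr {M L : ℕ} (S : Finset (Fin M × ZMod L)) (i j : Fin M) : Finset (ZMod L) :=
  if i = j then (((chan S i) ×ˢ (chan S j)).image fun p => p.1 - p.2).erase 0
  else ((chan S i) ×ˢ (chan S j)).image fun p => p.1 - p.2

/-- A multichannel conflict-avoiding code of length `L` and weight `w` in `M` channels. -/
def IsMCCAC (M L w : ℕ) (C : Finset (Finset (Fin M × ZMod L))) : Prop :=
  (∀ S ∈ C, S.card = w) ∧
  ∀ S ∈ C, ∀ S' ∈ C, S ≠ S' → ∀ i j : Fin M, Disjoint (Darr S i j) (Darr S' i j)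

/-- An MC-CAC with the at most one-packet per time slot (AM-OPPTS) property. -/
def IsAMOPPTSMCCAC (M L w : ℕ) (C : Finset (Finset (Fin M × ZMod L))) : Prop :=
  IsMCCAC M L w C ∧
  ∀ S ∈ C, ∀ t : ZMod L, ∀ i j : Fin M, (i, t) ∈ S → (j, t) ∈ S → i = j

open scoped Pointwise in
lemma cd_aux (L w : ℕ) (hw : 2 ≤ w)
    (hprime : ∀ p : ℕ, p.Prime → p ∣ L → 2 * w - 1 ≤ p)
    (s t : Finset (ZMod L)) (hs : s.Nonempty) (ht : t.Nonempty)
    (hsw : s.card ≤ w) (htw : t.card ≤ w) :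
    s.card + t.card - 1 ≤ ((s ×ˢ t).image fun p => p.1 - p.2).card := by
  have h1 : ((s ×ˢ t).image fun p => p.1 - p.2) = s + (-t) := by
    rw [← sub_eq_add_neg]; exact Finset.image_sub_product
  rw [h1]
  have h2 := cauchy_davenport_minOrder_add hs ht.neg
  rw [Finset.card_neg] at h2
  have h3 : ((2 * w - 1 : ℕ) : ℕ∞) ≤ AddMonoid.minOrder (ZMod L) := by
    rw [AddMonoid.le_minOrder]
    intro a ha _
    have hne : addOrderOf a ≠ 1 := by
      simpa [AddMonoid.addOrderOf_eq_one_iff] using ha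
    have hd : addOrderOf a ∣ L := by
      apply addOrderOf_dvd_of_nsmul_eq_zero
      simp
    have := hprime _ (Nat.minFac_prime hne) ((Nat.minFac_dvd _).trans hd)
    have hpos : 0 < addOrderOf a := by
      rwa [addOrderOf_pos_iff]
    exact_mod_cast this.trans (Nat.minFac_le hpos)
  have h4 : ((s.card + t.card - 1 : ℕ) : ℕ∞) ≤ ((2 * w - 1 : ℕ) : ℕ∞) := by
    exact_mod_cast (by omega)
  have h5 := (le_min (h4.trans h3) le_rfl).trans h2
  exact_mod_cast h5

lemma chan_sum {M L : ℕ} (S : Finset (Fin M × ZMod L)) :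
    ∑ i, (chan S i).card = S.card := by
  rw [Finset.card_eq_sum_card_fiberwise (f := Prod.fst) (t := Finset.univ) (by simp)]
  refine Finset.sum_congr rfl fun i _ => ?_
  unfold chan
  apply Finset.card_image_of_injOn
  rintro ⟨a, b⟩ h ⟨c, d⟩ h' hh
  simp at h h' hh
  ext1
  · simp [h.2, h'.2]
  · exact hh

lemma mem_chan {M L : ℕ} (S : Finset (Fin M × ZMod L)) (i : Fin M) (t : ZMod L) :
    t ∈ chan S i ↔ (i, t) ∈ S := by
  unfold chan
  simp

lemma zero_notMem {M L : ℕ} (S : Finset (Fin M × ZMod L))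
    (h : ∀ t : ZMod L, ∀ i j : Fin M, (i, t) ∈ S → (j, t) ∈ S → i = j) (i j : Fin M) :
    (0 : ZMod L) ∉ Darr S i j := by
  unfold Darr
  split_ifs with hij
  · simp
  · simp only [Finset.mem_image, Finset.mem_product, mem_chan, Prod.exists, not_exists, not_and]
    rintro a b ⟨ha, hb⟩ hab
    rw [sub_eq_zero] at hab
    subst hab
    exact hij (h _ _ _ ha hb)

theorem stmt_12 (M L w : ℕ) (hM : 0 < M) (hL : 0 < L) (hw : 2 ≤ w) (hMw : M < w)
    (hprime : ∀ p : ℕ, p.Prime → p ∣ L → 2 * w - 1 ≤ p)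
    (C : Finset (Finset (Fin M × ZMod L))) (hC : IsAMOPPTSMCCAC M L w C) :
    (C.card : ℝ) ≤
      (M : ℝ) * ((M : ℝ) - 1) * ((L : ℝ) - 1) / ((2 * (w : ℝ) - (M : ℝ)) * ((w : ℝ) - 1))
      + (M : ℝ) * ((L : ℝ) - 1) / (2 * (w : ℝ) - 2) := by
  obtain ⟨⟨hcard, hdisj⟩, hop⟩ := hC
  have : NeZero L := ⟨hL.ne'⟩
  have hMw' : (M : ℝ) + 1 ≤ w := by exact_mod_cast hMw
  have hw' : (2 : ℝ) ≤ w := by exact_mod_cast hw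
  have hM' : (1 : ℝ) ≤ M := by exact_mod_cast hM
  -- packing bound
  have hpack : ∀ i j : Fin M, ∑ S ∈ C, ((Darr S i j).card : ℝ) ≤ (L : ℝ) - 1 := by
    intro i j
    have h1 : (C.biUnion fun S => Darr S i j).card = ∑ S ∈ C, (Darr S i j).card :=
      Finset.card_biUnion fun S hS S' hS' hne => hdisj S hS S' hS' hne i j
    have h2 : (C.biUnion fun S => Darr S i j) ⊆ Finset.univ.erase 0 := by
      intro x hx
      rw [Finset.mem_biUnion] at hx
      obtain ⟨S, hS, hx⟩ := hx
      refine Finset.mem_erase.2 ⟨?_, Finset.mem_univ _⟩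
      rintro rfl
      exact zero_notMem S (hop S hS) i j hx
    have h3 := Finset.card_le_card h2
    rw [Finset.card_erase_of_mem (Finset.mem_univ _), Finset.card_univ, ZMod.card, h1] at h3
    have h4 : (∑ S ∈ C, (Darr S i j).card) + 1 ≤ L := by omega
    have h5 : (∑ S ∈ C, ((Darr S i j).card : ℝ)) + 1 ≤ L := by exact_mod_cast h4
    linarith
  set α : ℝ := 1 / ((2 * (w : ℝ) - (M : ℝ)) * ((w : ℝ) - 1)) with hα
  set β : ℝ := 1 / (2 * (w : ℝ) - 2) with hβ
  have hα0 : 0 ≤ α := by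
    apply one_div_nonneg.2; apply mul_nonneg <;> linarith
  have hβ0 : 0 ≤ β := by
    apply one_div_nonneg.2; linarith
  have hcsum : ∑ i : Fin M, ∑ j : Fin M, (if i = j then β else α)
      = (M : ℝ) * (M - 1) * α + M * β := by
    have : ∀ i j : Fin M, (if i = j then β else α) = α + (if i = j then β - α else 0) := by
      intro i j; split_ifs <;> ring
    simp only [this, Finset.sum_add_distrib, Finset.sum_ite_eq]
    simp
    ring
  -- weight of every codeword
  have hone : ∀ S ∈ C, 1 ≤ ∑ i : Fin M, ∑ j : Fin M,
      (if i = j then β else α) * ((Darr S i j).card : ℝ) := by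
    intro S hS
    have hsum := chan_sum S
    rw [hcard S hS] at hsum
    have hle : ∀ i, (chan S i).card ≤ w := by
      intro i
      rw [← hsum]
      exact Finset.single_le_sum (f := fun i => (chan S i).card) (fun _ _ => Nat.zero_le _)
        (Finset.mem_univ i)
    set a : Fin M → ℝ := fun i => ((chan S i).card : ℝ) with ha
    set e : Fin M → ℝ := fun i => if chan S i = ∅ then 0 else 1 with he
    have hasum : ∑ i, a i = w := by
      simp only [ha]; exact_mod_cast hsum
    set k : ℝ := ∑ i, e i with hk
    have he1 : ∀ i, e i ≤ 1 := by intro i; simp only [he]; split_ifs <;> norm_num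
    have he0 : ∀ i, 0 ≤ e i := by intro i; simp only [he]; split_ifs <;> norm_num
    have hkM : k ≤ M := by
      have := Finset.sum_le_sum (s := Finset.univ) fun i (_ : i ∈ Finset.univ) => he1 i
      simpa using this
    have hk1 : 1 ≤ k := by
      have : ∃ i, chan S i ≠ ∅ := by
        by_contra! hcon
        simp [hcon] at hsum
        omega
      obtain ⟨i, hi⟩ := this
      have h1 : e i = 1 := by simp [he, hi]
      rw [← h1]
      exact Finset.single_le_sum (fun j _ => he0 j) (Finset.mem_univ i)
    have hlow : ∀ i j, (if i = j then β * (2 * a i - 2 * e i)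
        else α * (a i * e j + e i * a j - e i * e j))
        ≤ (if i = j then β else α) * ((Darr S i j).card : ℝ) := by
      intro i j
      by_cases hij : i = j
      · subst hij
        simp only [if_true]
        apply mul_le_mul_of_nonneg_left _ hβ0
        by_cases hi : chan S i = ∅
        · simp [ha, he, hi]
        · have hcd := cd_aux L w hw hprime _ _ (Finset.nonempty_iff_ne_empty.2 hi)
            (Finset.nonempty_iff_ne_empty.2 hi) (hle i) (hle i)
          have h2 : 2 * (chan S i).card ≤ (Darr S i i).card + 2 := by
            unfold Darr
            rw [if_pos rfl]
            have := Finset.pred_card_le_card_erase (a := (0 : ZMod L))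
              (s := ((chan S i ×ˢ chan S i).image fun p => p.1 - p.2))
            omega
          have h3 : 2 * ((chan S i).card : ℝ) ≤ (Darr S i i).card + 2 := by exact_mod_cast h2
          simp only [ha, he, hi, if_false]
          linarith
      · simp only [hij, if_false]
        apply mul_le_mul_of_nonneg_left _ hα0
        by_cases hi : chan S i = ∅
        · simp [ha, he, hi]
        by_cases hj : chan S j = ∅
        · simp [ha, he, hj]
        have hcd := cd_aux L w hw hprime _ _ (Finset.nonempty_iff_ne_empty.2 hi)
            (Finset.nonempty_iff_ne_empty.2 hj) (hle i) (hle j)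
        have h2 : (chan S i).card + (chan S j).card ≤ (Darr S i j).card + 1 := by
          unfold Darr
          rw [if_neg hij]
          omega
        have h3 : ((chan S i).card : ℝ) + (chan S j).card ≤ (Darr S i j).card + 1 := by
          exact_mod_cast h2
        simp only [ha, he, hi, hj, if_false]
        linarith
    refine le_trans ?_ (Finset.sum_le_sum fun i _ => Finset.sum_le_sum fun j _ => hlow i j)
    have hee : ∀ i, e i * e i = e i := by intro i; simp only [he]; split_ifs <;> norm_num
    have hae : ∀ i, a i * e i = a i := by
      intro i; simp only [he, ha]; split_ifs with h <;> simp [h]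
    have hre : ∀ i j, (if i = j then β * (2 * a i - 2 * e i)
        else α * (a i * e j + e i * a j - e i * e j))
        = α * (a i * e j + e i * a j - e i * e j)
          + (if i = j then β * (2 * a i - 2 * e i) - α * (2 * a i - e i) else 0) := by
      intro i j
      split_ifs with h
      · subst h
        linear_combination (-2 * α) * hae i + α * hee i
      · ring
    have htot : ∑ i, ∑ j, (if i = j then β * (2 * a i - 2 * e i)
        else α * (a i * e j + e i * a j - e i * e j))
        = α * ((k - 1) * (2 * w - k)) + β * (2 * w - 2 * k) := by
      simp only [hre, Finset.sum_add_distrib, Finset.sum_ite_eq, Finset.mem_univ, if_true,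
        ← Finset.mul_sum, Finset.sum_sub_distrib, ← Finset.sum_mul, hasum, ← hk]
      ring
    rw [htot]
    have hβ' : β * (2 * w - 2 * k) = 1 - (k - 1) * (1 / ((w : ℝ) - 1)) := by
      have : (w : ℝ) - 1 ≠ 0 := by linarith
      have h2 : 2 * (w : ℝ) - 2 ≠ 0 := by linarith
      rw [hβ]; field_simp; ring
    have hα' : 1 / ((w : ℝ) - 1) = α * (2 * w - M) := by
      have : (w : ℝ) - 1 ≠ 0 := by linarith
      have h2 : 2 * (w : ℝ) - M ≠ 0 := by linarith
      rw [hα, one_div, one_div, mul_inv, mul_comm, ← mul_assoc, mul_inv_cancel₀ h2, one_mul]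
    rw [hβ', hα']
    have : 0 ≤ α * ((k - 1) * (M - k)) :=
      mul_nonneg hα0 (mul_nonneg (by linarith) (by linarith))
    nlinarith
  calc (C.card : ℝ) = ∑ S ∈ C, (1 : ℝ) := by simp
    _ ≤ ∑ S ∈ C, ∑ i : Fin M, ∑ j : Fin M,
      (if i = j then β else α) * ((Darr S i j).card : ℝ) := Finset.sum_le_sum hone
    _ = ∑ i : Fin M, ∑ j : Fin M,
      (if i = j then β else α) * ∑ S ∈ C, ((Darr S i j).card : ℝ) := by
        rw [Finset.sum_comm]
        refine Finset.sum_congr rfl fun i _ => ?_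
        rw [Finset.sum_comm]
        refine Finset.sum_congr rfl fun j _ => ?_
        rw [Finset.mul_sum]
    _ ≤ ∑ i : Fin M, ∑ j : Fin M, (if i = j then β else α) * ((L : ℝ) - 1) := by
        refine Finset.sum_le_sum fun i _ => Finset.sum_le_sum fun j _ => ?_
        apply mul_le_mul_of_nonneg_left (hpack i j)
        split_ifs <;> assumption
    _ = ((M : ℝ) * (M - 1) * α + M * β) * ((L : ℝ) - 1) := by
        simp only [← Finset.sum_mul, hcsum]
    _ = _ := by
        rw [hα, hβ]; ring
end

section
/- Let A and B be nonempty subsets of Z_L with |A| = |B| and |A - B| ≤ |A| + |B| - 2. Then |H(A - B)| does not divide |A| - 1. -/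
/-- The difference set `A - B = {a - b : a ∈ A, b ∈ B}` in `Z_L`. -/
def fdiff {L : ℕ} (A B : Finset (ZMod L)) : Finset (ZMod L) :=
  (A ×ˢ B).image fun p => p.1 - p.2

/-- The stabilizer `H(T) = {h ∈ Z_L : h + T = T}` of a subset `T ⊆ Z_L`. -/
def stab {L : ℕ} [NeZero L] (T : Finset (ZMod L)) : Finset (ZMod L) :=
  Finset.univ.filter fun h => T.image (fun t => h + t) = T

theorem mem_stab_iff {L : ℕ} [NeZero L] (T : Finset (ZMod L)) (h : ZMod L) :
    h ∈ stab T ↔ ∀ t, h + t ∈ T ↔ t ∈ T := by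
  simp only [stab, Finset.mem_filter, Finset.mem_univ, true_and]
  constructor
  · intro hh t
    conv_lhs => rw [← hh]
    simp
  · intro hh
    ext t
    simp only [Finset.mem_image]
    constructor
    · rintro ⟨a, ha, rfl⟩
      exact (hh a).2 ha
    · intro ht
      refine ⟨t - h, ?_, by ring⟩
      rw [← hh]
      simpa using ht

theorem mem_stab_of_subset {L : ℕ} [NeZero L] (T : Finset (ZMod L)) (h : ZMod L)
    (hh : ∀ t ∈ T, h + t ∈ T) : h ∈ stab T := by
  simp only [stab, Finset.mem_filter, Finset.mem_univ, true_and]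
  apply Finset.eq_of_subset_of_card_le
  · intro x hx
    obtain ⟨a, ha, rfl⟩ := Finset.mem_image.1 hx
    exact hh a ha
  · rw [Finset.card_image_of_injective _ (add_right_injective h)]

theorem zero_mem_stab {L : ℕ} [NeZero L] (T : Finset (ZMod L)) : (0 : ZMod L) ∈ stab T := by
  simp [mem_stab_iff]

theorem add_mem_stab {L : ℕ} [NeZero L] {T : Finset (ZMod L)} {x y : ZMod L}
    (hx : x ∈ stab T) (hy : y ∈ stab T) : x + y ∈ stab T := by
  rw [mem_stab_iff] at *
  intro t
  rw [add_assoc, hx, hy]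

theorem neg_mem_stab {L : ℕ} [NeZero L] {T : Finset (ZMod L)} {x : ZMod L}
    (hx : x ∈ stab T) : -x ∈ stab T := by
  rw [mem_stab_iff] at *
  intro t
  rw [← hx]; simp

theorem sub_mem_stab {L : ℕ} [NeZero L] {T : Finset (ZMod L)} {x y : ZMod L}
    (hx : x ∈ stab T) (hy : y ∈ stab T) : x - y ∈ stab T := by
  rw [sub_eq_add_neg]; exact add_mem_stab hx (neg_mem_stab hy)

/-- grid counting -/
theorem grid_count {L : ℕ} [NeZero L] (C1 C2 : Finset (ZMod L)) (c : ZMod L)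
    (U V W : Finset (ZMod L)) (hU : U ⊆ stab C2) (hV : V ⊆ stab C1)
    (hW : ∀ x ∈ U, ∀ y ∈ V, c + x + y ∈ W) :
    U.card * V.card ≤ (stab C1 ∩ stab C2).card * W.card := by
  rw [← Finset.card_product]
  refine le_trans (Finset.card_le_mul_card_image (f := fun p : ZMod L × ZMod L => c + p.1 + p.2)
    (U ×ˢ V) (stab C1 ∩ stab C2).card ?_) ?_
  · intro b hb
    obtain ⟨⟨x0, y0⟩, hp, rfl⟩ := Finset.mem_image.1 hb
    rw [Finset.mem_product] at hp
    refine Finset.card_le_card_of_injOn (fun p => p.1 - x0) ?_ ?_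
    · rintro ⟨x, y⟩ hxy
      simp only [Finset.coe_filter, Set.mem_setOf_eq, Finset.mem_product] at hxy
      obtain ⟨⟨hx, hy⟩, he⟩ := hxy
      have e : x - x0 = y0 - y := by linear_combination he
      simp only [Finset.coe_inter, Set.mem_inter_iff, Finset.mem_coe]
      constructor
      · rw [e]; exact sub_mem_stab (hV hp.2) (hV hy)
      · exact sub_mem_stab (hU hx) (hU hp.1)
    · rintro ⟨x, y⟩ hxy ⟨x', y'⟩ hxy' he
      simp only [Finset.coe_filter, Set.mem_setOf_eq, Finset.mem_product] at hxy hxy' he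
      have e : x = x' := by linear_combination he
      have e2 : y = y' := by linear_combination hxy.2 - hxy'.2 - he
      rw [e, e2]
  · apply Nat.mul_le_mul_left
    apply Finset.card_le_card
    intro z hz
    obtain ⟨⟨x, y⟩, hp, rfl⟩ := Finset.mem_image.1 hz
    rw [Finset.mem_product] at hp
    exact hW x hp.1 y hp.2

theorem card_ge_of_coset {L : ℕ} (H U : Finset (ZMod L)) (x : ZMod L)
    (h : ∀ y ∈ H, y + x ∈ U) : H.card ≤ U.card :=
  Finset.card_le_card_of_injOn (fun y => y + x) (fun y hy => h y hy)
    (fun a _ b _ e => add_right_cancel e)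

theorem half_lemma {L : ℕ} [NeZero L] (C1 C2 : Finset (ZMod L)) (c : ZMod L)
    (hc2 : c ∈ C2) (hc1 : c ∉ C1) :
    (stab C1).card ≤ (C2 \ C1).card + (stab C1 ∩ stab C2).card ∨
    (stab C2).card ≤ (C1 \ C2).card + (stab C1 ∩ stab C2).card ∨
    (stab C2).card ≤ (C2 \ C1).card := by
  classical
  set H := stab C1 ∩ stab C2 with hH
  have hHpos : 0 < H.card := Finset.card_pos.2
    ⟨0, Finset.mem_inter.2 ⟨zero_mem_stab _, zero_mem_stab _⟩⟩
  set U := (stab C2).filter (fun x => c + x ∉ C1) with hU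
  set U' := (stab C2).filter (fun x => ¬ (c + x ∉ C1)) with hU'
  set V := (stab C1).filter (fun x => c + x ∈ C2) with hV
  set V' := (stab C1).filter (fun x => ¬ (c + x ∈ C2)) with hV'
  have sU : U.card + U'.card = (stab C2).card := Finset.card_filter_add_card_filter_not _
  have sV : V.card + V'.card = (stab C1).card := Finset.card_filter_add_card_filter_not _
  have k1 : ∀ x y, y ∈ stab C1 → (c + x + y ∈ C1 ↔ c + x ∈ C1) := by
    intro x y hy
    rw [add_comm]; exact (mem_stab_iff _ _).1 hy _
  have k2 : ∀ x y, x ∈ stab C2 → (c + x + y ∈ C2 ↔ c + y ∈ C2) := by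
    intro x y hx
    rw [show c + x + y = x + (c + y) by ring]; exact (mem_stab_iff _ _).1 hx _
  have g1 : U.card * V.card ≤ H.card * (C2 \ C1).card := by
    apply grid_count C1 C2 c _ _ _ (Finset.filter_subset _ _) (Finset.filter_subset _ _)
    intro x hx y hy
    rw [Finset.mem_filter] at hx hy
    rw [Finset.mem_sdiff, k1 _ _ hy.1, k2 _ _ hx.1]
    exact ⟨hy.2, hx.2⟩
  have g2 : U'.card * V'.card ≤ H.card * (C1 \ C2).card := by
    apply grid_count C1 C2 c _ _ _ (Finset.filter_subset _ _) (Finset.filter_subset _ _)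
    intro x hx y hy
    rw [Finset.mem_filter] at hx hy
    rw [Finset.mem_sdiff, k1 _ _ hy.1, k2 _ _ hx.1]
    exact ⟨not_not.1 hx.2, hy.2⟩
  have cU : ∀ x ∈ U, H.card ≤ U.card := by
    intro x hx
    apply card_ge_of_coset H U x
    intro y hy
    rw [Finset.mem_inter] at hy
    rw [Finset.mem_filter] at hx ⊢
    refine ⟨add_mem_stab hy.2 hx.1, ?_⟩
    rw [show c + (y + x) = c + x + y by ring, k1 _ _ hy.1]; exact hx.2
  have cU' : ∀ x ∈ U', H.card ≤ U'.card := by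
    intro x hx
    apply card_ge_of_coset H U' x
    intro y hy
    rw [Finset.mem_inter] at hy
    rw [Finset.mem_filter] at hx ⊢
    refine ⟨add_mem_stab hy.2 hx.1, ?_⟩
    rw [show c + (y + x) = c + x + y by ring, k1 _ _ hy.1]; exact hx.2
  have cV : ∀ x ∈ V, H.card ≤ V.card := by
    intro x hx
    apply card_ge_of_coset H V x
    intro y hy
    rw [Finset.mem_inter] at hy
    rw [Finset.mem_filter] at hx ⊢
    refine ⟨add_mem_stab hy.1 hx.1, ?_⟩
    rw [show c + (y + x) = c + y + x by ring, k2 _ _ hy.2]; exact hx.2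
  have cV' : ∀ x ∈ V', H.card ≤ V'.card := by
    intro x hx
    apply card_ge_of_coset H V' x
    intro y hy
    rw [Finset.mem_inter] at hy
    rw [Finset.mem_filter] at hx ⊢
    refine ⟨add_mem_stab hy.1 hx.1, ?_⟩
    rw [show c + (y + x) = c + y + x by ring, k2 _ _ hy.2]; exact hx.2
  have hU0 := cU 0 (by rw [Finset.mem_filter]; exact ⟨zero_mem_stab _, by simpa using hc1⟩)
  have hV0 := cV 0 (by rw [Finset.mem_filter]; exact ⟨zero_mem_stab _, by simpa using hc2⟩)
  rcases U'.eq_empty_or_nonempty with hE | ⟨x, hx⟩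
  · right; right
    rw [hE, Finset.card_empty] at sU
    have : H.card * U.card ≤ H.card * (C2 \ C1).card := by nlinarith
    have := Nat.le_of_mul_le_mul_left this hHpos
    omega
  rcases V'.eq_empty_or_nonempty with hE | ⟨y, hy⟩
  · left
    rw [hE, Finset.card_empty] at sV
    have : H.card * V.card ≤ H.card * (C2 \ C1).card := by nlinarith
    have := Nat.le_of_mul_le_mul_left this hHpos
    omega
  have hU1 := cU' x hx
  have hV1 := cV' y hy
  have key : ∀ h u v w : ℕ, 0 < h → h ≤ u → h ≤ v → u * v ≤ h * w → u + v ≤ w + h := by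
    intro h u v w h0 hu hv hw
    obtain ⟨a, rfl⟩ := Nat.exists_eq_add_of_le hu
    obtain ⟨b, rfl⟩ := Nat.exists_eq_add_of_le hv
    have : h * (h + a + b) ≤ h * w := by nlinarith [Nat.zero_le (a * b)]
    have := Nat.le_of_mul_le_mul_left this h0
    omega
  have r1 := key _ _ _ _ hHpos hU0 hV0 g1
  have r2 := key _ _ _ _ hHpos hU1 hV1 g2
  omega

theorem union_lemma {L : ℕ} [NeZero L] (C1 C2 : Finset (ZMod L)) (N : ℕ)
    (h1 : N ≤ C1.card + (stab C1).card) (h2 : N ≤ C2.card + (stab C2).card) :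
    N ≤ (C1 ∪ C2).card + (stab (C1 ∪ C2)).card := by
  by_cases s1 : C1 ⊆ C2
  · rwa [Finset.union_eq_right.2 s1]
  by_cases s2 : C2 ⊆ C1
  · rwa [Finset.union_eq_left.2 s2]
  obtain ⟨d, hd1, hd2⟩ := Finset.not_subset.1 s1
  obtain ⟨c, hc2, hc1⟩ := Finset.not_subset.1 s2
  have a := half_lemma C1 C2 c hc2 hc1
  have b := half_lemma C2 C1 d hd1 hd2
  rw [Finset.inter_comm] at b
  have e1 : (C1 ∪ C2).card = C1.card + (C2 \ C1).card := by
    have := Finset.card_sdiff_add_card C2 C1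
    rw [Finset.union_comm]; omega
  have e2 : (C1 ∪ C2).card = C2.card + (C1 \ C2).card := by
    have := Finset.card_sdiff_add_card C1 C2
    omega
  have e3 : (stab C1 ∩ stab C2).card ≤ (stab (C1 ∪ C2)).card := by
    apply Finset.card_le_card
    intro x hx
    rw [Finset.mem_inter, mem_stab_iff, mem_stab_iff] at hx
    rw [mem_stab_iff]
    intro t
    rw [Finset.mem_union, Finset.mem_union, hx.1, hx.2]
  omega

theorem mem_fdiff {L : ℕ} (A B : Finset (ZMod L)) (x : ZMod L) :
    x ∈ fdiff A B ↔ ∃ a ∈ A, ∃ b ∈ B, a - b = x := by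
  simp only [fdiff, Finset.mem_image, Finset.mem_product, Prod.exists]
  constructor
  · rintro ⟨a, b, ⟨ha, hb⟩, e⟩; exact ⟨a, ha, b, hb, e⟩
  · rintro ⟨a, ha, b, hb, e⟩; exact ⟨a, b, ⟨ha, hb⟩, e⟩

theorem local_lemma {L : ℕ} [NeZero L] (n : ℕ) : ∀ (A B : Finset (ZMod L)) (a b : ZMod L),
    B.card = n → a ∈ A → b ∈ B →
    ∃ D ⊆ fdiff A B, a - b ∈ D ∧ A.card + B.card ≤ D.card + (stab D).card := by
  induction n using Nat.strong_induction_on with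
  | _ n ih =>
  intro A B a b hn ha hb
  by_cases hall : ∀ e ∈ A, ∀ y ∈ B, e + b - y ∈ A
  · refine ⟨A.image (fun t => t - b), ?_, Finset.mem_image_of_mem _ ha, ?_⟩
    · intro x hx
      obtain ⟨t, ht, rfl⟩ := Finset.mem_image.1 hx
      exact (mem_fdiff _ _ _).2 ⟨t, ht, b, hb, rfl⟩
    · rw [Finset.card_image_of_injective _ (sub_left_injective)]
      apply Nat.add_le_add_left
      refine Finset.card_le_card_of_injOn (fun y => b - y) ?_
        (fun x _ y _ e => sub_right_injective e)
      intro y hy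
      apply mem_stab_of_subset
      intro t ht
      obtain ⟨s, hs, rfl⟩ := Finset.mem_image.1 ht
      exact Finset.mem_image.2 ⟨s + b - y, hall s hs y hy, by ring⟩
  · push Not at hall
    obtain ⟨e, he, y, hy, hey⟩ := hall
    set B' := B.filter (fun z => e + b - z ∈ A) with hB'
    set I := B.image (fun z => e + b - z) with hI
    have hlt : B'.card < n := by
      rw [← hn]
      apply Finset.card_lt_card
      rw [Finset.ssubset_iff_of_subset (Finset.filter_subset _ _)]
      exact ⟨y, hy, fun h => hey (Finset.mem_filter.1 h).2⟩
    obtain ⟨D, hD, hab, hcard⟩ := ih _ hlt (A ∪ I) B' a b rfl (Finset.mem_union_left _ ha)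
      (Finset.mem_filter.2 ⟨hb, by simpa using he⟩)
    refine ⟨D, hD.trans ?_, hab, ?_⟩
    · intro x hx
      obtain ⟨p, hp, q, hq, rfl⟩ := (mem_fdiff _ _ _).1 hx
      rw [Finset.mem_filter] at hq
      rw [mem_fdiff]
      rcases Finset.mem_union.1 hp with hp | hp
      · exact ⟨p, hp, q, hq.1, rfl⟩
      · obtain ⟨z, hz, rfl⟩ := Finset.mem_image.1 hp
        exact ⟨_, hq.2, z, hz, by ring⟩
    · have c1 := Finset.card_union_add_card_inter A I
      have c2 : I.card = B.card := Finset.card_image_of_injective _ sub_right_injective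
      have c3 : (A ∩ I).card ≤ B'.card := by
        have : A ∩ I ⊆ B'.image (fun z => e + b - z) := by
          intro x hx
          rw [Finset.mem_inter] at hx
          obtain ⟨z, hz, rfl⟩ := Finset.mem_image.1 hx.2
          exact Finset.mem_image_of_mem _ (Finset.mem_filter.2 ⟨hz, hx.1⟩)
        exact (Finset.card_le_card this).trans Finset.card_image_le
      omega

theorem kneser_weak {L : ℕ} [NeZero L] (A B : Finset (ZMod L)) (hA : A.Nonempty)
    (hB : B.Nonempty) : A.card + B.card ≤ (fdiff A B).card + (stab (fdiff A B)).card := by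
  have main : ∀ s : Finset (ZMod L), s.Nonempty → s ⊆ fdiff A B →
      ∃ E ⊆ fdiff A B, s ⊆ E ∧ A.card + B.card ≤ E.card + (stab E).card := by
    have loc : ∀ x ∈ fdiff A B,
        ∃ D ⊆ fdiff A B, x ∈ D ∧ A.card + B.card ≤ D.card + (stab D).card := by
      intro x hx
      obtain ⟨a, ha, b, hb, rfl⟩ := (mem_fdiff _ _ _).1 hx
      exact local_lemma _ A B a b rfl ha hb
    intro s hs
    induction hs using Finset.Nonempty.cons_induction with
    | singleton a =>
      intro h
      obtain ⟨D, h1, h2, h3⟩ := loc a (h (by simp))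
      exact ⟨D, h1, by simpa using h2, h3⟩
    | cons a s has hs ih =>
      intro h
      rw [Finset.cons_eq_insert] at h ⊢
      obtain ⟨D, h1, h2, h3⟩ := loc a (h (by simp))
      obtain ⟨E, h4, h5, h6⟩ := ih ((Finset.subset_insert _ _).trans h)
      refine ⟨D ∪ E, Finset.union_subset h1 h4, ?_, union_lemma _ _ _ h3 h6⟩
      exact Finset.insert_subset (Finset.mem_union_left _ h2)
        (h5.trans Finset.subset_union_right)
  obtain ⟨a, ha⟩ := hA
  obtain ⟨b, hb⟩ := hB
  obtain ⟨E, h1, h2, h3⟩ := main _ ⟨a - b, (mem_fdiff _ _ _).2 ⟨a, ha, b, hb, rfl⟩⟩ subset_rfl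
  rwa [Finset.Subset.antisymm h1 h2] at h3

theorem stab_dvd {L : ℕ} [NeZero L] (T : Finset (ZMod L)) (n : ℕ) : ∀ X : Finset (ZMod L),
    X.card = n → (∀ h ∈ stab T, ∀ x ∈ X, h + x ∈ X) → (stab T).card ∣ X.card := by
  induction n using Nat.strong_induction_on with
  | _ n ih =>
  intro X hn hX
  rcases X.eq_empty_or_nonempty with rfl | ⟨x, hx⟩
  · simp
  set K := (stab T).image (fun h => h + x) with hK
  have cK : K.card = (stab T).card := Finset.card_image_of_injective _ (add_left_injective x)
  have sK : K ⊆ X := by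
    intro z hz
    obtain ⟨h, hh, rfl⟩ := Finset.mem_image.1 hz
    exact hX h hh x hx
  have hc := Finset.card_sdiff_add_card_eq_card sK
  have hpos : 0 < (stab T).card := Finset.card_pos.2 ⟨0, zero_mem_stab _⟩
  rw [← hc, cK]
  apply Dvd.dvd.add _ dvd_rfl
  refine ih _ (by omega) _ rfl ?_
  intro h hh z hz
  rw [Finset.mem_sdiff] at hz ⊢
  refine ⟨hX h hh z hz.1, fun hk => hz.2 ?_⟩
  obtain ⟨g, hg, e⟩ := Finset.mem_image.1 hk
  exact Finset.mem_image.2 ⟨g - h, sub_mem_stab hg hh, by linear_combination e⟩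

theorem big_card {L : ℕ} [NeZero L] (T A X : Finset (ZMod L)) (hA : A.Nonempty) (hAX : A ⊆ X)
    (hX : ∀ h ∈ stab T, ∀ x ∈ X, h + x ∈ X) (hd : (stab T).card ∣ A.card - 1) :
    A.card - 1 + (stab T).card ≤ X.card := by
  obtain ⟨k, hk⟩ := hd
  obtain ⟨m, hm⟩ := stab_dvd T _ X rfl hX
  have h1 := Finset.card_le_card hAX
  have h2 := Finset.card_pos.2 hA
  rw [hk, hm]
  have : k < m := by
    by_contra hlt
    push Not at hlt
    have := Nat.mul_le_mul_left (stab T).card hlt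
    omega
  have := Nat.mul_le_mul_left (stab T).card (show k + 1 ≤ m from this)
  rwa [Nat.mul_add, Nat.mul_one] at this

theorem stmt_18 (L : ℕ) [NeZero L] (A B : Finset (ZMod L))
    (hA : A.Nonempty) (hB : B.Nonempty) (hcard : A.card = B.card)
    (hexc : (fdiff A B).card ≤ A.card + B.card - 2) :
    ¬ (stab (fdiff A B)).card ∣ A.card - 1 := by
  intro hd
  set T := fdiff A B with hT
  have hpos : 0 < (stab T).card := Finset.card_pos.2 ⟨0, zero_mem_stab _⟩
  let sat : Finset (ZMod L) → Finset (ZMod L) :=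
    fun Y => (Y ×ˢ stab T).image (fun p => p.1 + p.2)
  have msat : ∀ Y x, x ∈ sat Y ↔ ∃ y ∈ Y, ∃ h ∈ stab T, y + h = x := by
    intro Y x
    simp only [sat, Finset.mem_image, Finset.mem_product, Prod.exists]
    constructor
    · rintro ⟨a, b, ⟨ha, hb⟩, e⟩; exact ⟨a, ha, b, hb, e⟩
    · rintro ⟨a, ha, b, hb, e⟩; exact ⟨a, b, ⟨ha, hb⟩, e⟩
  have sub : ∀ Y, Y ⊆ sat Y := fun Y y hy =>
    (msat _ _).2 ⟨y, hy, 0, zero_mem_stab _, by simp⟩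
  have inv : ∀ Y, ∀ h ∈ stab T, ∀ x ∈ sat Y, h + x ∈ sat Y := by
    intro Y h hh x hx
    obtain ⟨y, hy, g, hg, rfl⟩ := (msat _ _).1 hx
    exact (msat _ _).2 ⟨y, hy, h + g, add_mem_stab hh hg, by ring⟩
  have bA := big_card T A (sat A) hA (sub A) (inv A) hd
  have bB := big_card T B (sat B) hB (sub B) (inv B) (hcard ▸ hd)
  have eT : fdiff (sat A) (sat B) = T := by
    apply Finset.Subset.antisymm
    · intro x hx
      obtain ⟨p, hp, q, hq, rfl⟩ := (mem_fdiff _ _ _).1 hx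
      obtain ⟨a, ha, g, hg, rfl⟩ := (msat _ _).1 hp
      obtain ⟨b, hb, h, hh, rfl⟩ := (msat _ _).1 hq
      have := ((mem_stab_iff T (g - h)).1 (sub_mem_stab hg hh) (a - b)).2
        ((mem_fdiff _ _ _).2 ⟨a, ha, b, hb, rfl⟩)
      rwa [show a + g - (b + h) = g - h + (a - b) by ring]
    · intro x hx
      obtain ⟨a, ha, b, hb, rfl⟩ := (mem_fdiff _ _ _).1 hx
      exact (mem_fdiff _ _ _).2 ⟨a, sub A ha, b, sub B hb, rfl⟩
  have kn := kneser_weak (sat A) (sat B) (hA.mono (sub A)) (hB.mono (sub B))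
  rw [eT] at kn
  have := Finset.card_pos.2 hA
  omega
end
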